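/- arXiv:1110.5954 — 3 statements merged into one kernel-verified Lean document; each statement's English description precedes it below -/
import Mathlib

section
/- Let n ≥ 1, c ∈ ℝ, T > 0, and let A : ℝ → M_n(ℝ) be a differentiable family of symmetric real n×n matrices such that for every t ∈ [0,T) the matrix c·A(t) − A'(t) is positive semidefinite. Then for every t ∈ [0,T), the matrix e^{ct}·A(0) − A(t) is positive semidefinite. -/
/-!
For a fixed vector `x` the quadratic form `q(t) = xᵀ A(t) x` is a real differentiable function with
`q' ≤ c q` on `[0,T)`, so `e^{-ct} q(t)` is nonincreasing there (`scalar_gronwall`); hence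
`q(t) ≤ e^{ct} q(0)`, which is the Loewner inequality tested on `x`.
-/

open Set Matrix

theorem scalar_gronwall {c T : ℝ} {q q' : ℝ → ℝ} (hq : ∀ t, HasDerivAt q (q' t) t)
    (hle : ∀ t ∈ Ico (0 : ℝ) T, q' t ≤ c * q t) {t : ℝ} (ht : t ∈ Ico (0 : ℝ) T) :
    q t ≤ Real.exp (c * t) * q 0 := by
  have hd : ∀ s, HasDerivAt (fun s => Real.exp (-(c * s)) * q s)
      (Real.exp (-(c * s)) * (q' s - c * q s)) s := by
    intro s
    have he : HasDerivAt (fun s => Real.exp (-(c * s))) (Real.exp (-(c * s)) * (-(c * 1))) s :=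
      (((hasDerivAt_id s).const_mul c).neg).exp
    exact (he.mul (hq s)).congr_deriv (by ring)
  have hanti : AntitoneOn (fun s => Real.exp (-(c * s)) * q s) (Ico 0 T) := by
    refine antitoneOn_of_hasDerivWithinAt_nonpos (convex_Ico 0 T)
      (fun s _ => (hd s).continuousAt.continuousWithinAt)
      (fun s _ => (hd s).hasDerivWithinAt) (fun s hs => ?_)
    exact mul_nonpos_of_nonneg_of_nonpos (Real.exp_pos _).le
      (sub_nonpos.2 (hle s (interior_subset hs)))
  have h0 : Real.exp (-(c * t)) * q t ≤ q 0 := by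
    simpa using hanti ⟨le_rfl, ht.1.trans_lt ht.2⟩ ht ht.1
  calc q t = Real.exp (c * t) * (Real.exp (-(c * t)) * q t) := by
        rw [← mul_assoc, ← Real.exp_add]; simp
    _ ≤ Real.exp (c * t) * q 0 := mul_le_mul_of_nonneg_left h0 (Real.exp_pos _).le

/-- Gronwall-type comparison in the Loewner order: if `A` is a differentiable
family of symmetric matrices with `c·A(t) - A'(t) ⪰ 0` on `[0,T)`, then
`e^{ct}·A(0) - A(t) ⪰ 0` on `[0,T)`. -/
theorem loewner_gronwall (n : ℕ) (hn : 1 ≤ n) (c : ℝ) (T : ℝ) (hT : 0 < T)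
    (A A' : ℝ → Matrix (Fin n) (Fin n) ℝ)
    (hsymm : ∀ t : ℝ, (A t).IsSymm)
    (hdiff : ∀ (t : ℝ) (i j : Fin n), HasDerivAt (fun s => A s i j) (A' t i j) t)
    (hineq : ∀ t ∈ Ico (0 : ℝ) T, (c • A t - A' t).PosSemidef) :
    ∀ t ∈ Ico (0 : ℝ) T, (Real.exp (c * t) • A 0 - A t).PosSemidef := by
  intro t ht
  refine PosSemidef.of_dotProduct_mulVec_nonneg ?_ (fun x => ?_)
  · -- over `ℝ` the conjugate transpose is the transpose
    rw [IsHermitian, conjTranspose_eq_transpose_of_trivial, transpose_sub, transpose_smul,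
      (hsymm 0).eq, (hsymm t).eq]
  · have hq : ∀ s, HasDerivAt (fun s => x ⬝ᵥ (A s *ᵥ x)) (x ⬝ᵥ (A' s *ᵥ x)) s := by
      intro s
      simp only [dotProduct, mulVec]
      exact HasDerivAt.fun_sum fun i _ =>
        (HasDerivAt.fun_sum fun j _ => (hdiff s i j).mul_const (x j)).const_mul (x i)
    have hle : ∀ s ∈ Ico (0 : ℝ) T, x ⬝ᵥ (A' s *ᵥ x) ≤ c * (x ⬝ᵥ (A s *ᵥ x)) := by
      intro s hs
      have h := (hineq s hs).dotProduct_mulVec_nonneg x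
      simpa [sub_mulVec, smul_mulVec, dotProduct_sub, dotProduct_smul] using h
    have h := scalar_gronwall hq hle ht
    simpa [sub_mulVec, smul_mulVec, dotProduct_sub, dotProduct_smul] using h
end

section
/- Let X be a nonempty compact topological space and μ a finite Borel measure on X with μ(X) > 0. Let 0 < T < ∞, α ∈ (0,1], B ∈ ℝ, C₀ > 0, C₁ > 0 and let K ≥ 0 be an integer. Suppose that for each t ∈ [0,T) we are given a continuous function f_t : X → ℝ with: (i) f_t(x) ≤ B for all x ∈ X; (ii) ∫_X e^{α(f_t − inf_X f_t)} dμ ≤ C₀; and (iii) ∫_X e^{f_t} dμ ≥ C₁·(T−t)^K. Then there exists a constant C' > 0 such that for all t ∈ [0,T), inf_X f_t ≥ −C' + (K/α)·log(T−t). -/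
/-!
Write `m = inf f_t`. Since `f_t ≤ B` and `α ≤ 1`, pointwise
`e^{f_t} ≤ e^{(1-α)B + α m} · e^{α(f_t - m)}`. Integrating and using the volume lower bound
and the α-invariant estimate gives `C₁ (T-t)^K ≤ e^{(1-α)B + α m} C₀`; taking logarithms and
dividing by `α` bounds `m` from below by `(K/α) log (T-t)` plus the constant
`(log C₁ - log C₀ - (1-α)B) / α`.
-/

open MeasureTheory Set

/-- The key estimate of Section 2: for a family of continuous functions `f t`
on a compact space, uniformly bounded above, satisfying Tian's α-invariant
estimate and the volume lower bound `∫ e^{f_t} dμ ≥ C₁·(T-t)^K`, one gets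
`inf f_t ≥ -C' + (K/α)·log(T-t)`. -/
theorem inf_lower_bound_finite_time {X : Type*} [TopologicalSpace X]
    [CompactSpace X] [Nonempty X] [MeasurableSpace X] [BorelSpace X]
    (μ : Measure X) [IsFiniteMeasure μ] (hμ : 0 < μ Set.univ)
    (T : ℝ) (hT : 0 < T)
    (α : ℝ) (hα0 : 0 < α) (hα1 : α ≤ 1) (B : ℝ) (C₀ C₁ : ℝ) (hC₀ : 0 < C₀)
    (hC₁ : 0 < C₁) (K : ℕ)
    (f : ℝ → X → ℝ)
    (hcont : ∀ t ∈ Ico (0 : ℝ) T, Continuous (f t))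
    (hB : ∀ t ∈ Ico (0 : ℝ) T, ∀ x : X, f t x ≤ B)
    (htian : ∀ t ∈ Ico (0 : ℝ) T,
      ∫ x, Real.exp (α * (f t x - sInf (Set.range (f t)))) ∂μ ≤ C₀)
    (hvol : ∀ t ∈ Ico (0 : ℝ) T, C₁ * (T - t) ^ K ≤ ∫ x, Real.exp (f t x) ∂μ) :
    ∃ C' : ℝ, 0 < C' ∧ ∀ t ∈ Ico (0 : ℝ) T,
      sInf (Set.range (f t)) ≥ -C' + ((K : ℝ) / α) * Real.log (T - t) := by
  set D : ℝ := (Real.log C₁ - Real.log C₀ - (1 - α) * B) / α with hD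
  refine ⟨|D| + 1, by positivity, fun t ht => ?_⟩
  set m : ℝ := sInf (Set.range (f t)) with hm
  have hTt : 0 < T - t := sub_pos.mpr ht.2
  have hc := hcont t ht
  have hint : ∀ g : X → ℝ, Continuous g → Integrable g μ := fun g hg =>
    hg.integrable_of_hasCompactSupport (HasCompactSupport.of_compactSpace g)
  have hle : ∫ x, Real.exp (f t x) ∂μ ≤
      Real.exp ((1 - α) * B + α * m) * ∫ x, Real.exp (α * (f t x - m)) ∂μ := by
    rw [← integral_const_mul]
    refine integral_mono (hint _ (by fun_prop)) (hint _ (by fun_prop)) fun x => ?_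
    dsimp only
    rw [← Real.exp_add]
    refine Real.exp_le_exp.mpr ?_
    nlinarith [mul_le_mul_of_nonneg_left (hB t ht x) (sub_nonneg.mpr hα1)]
  have hmain : C₁ * (T - t) ^ K ≤ Real.exp ((1 - α) * B + α * m) * C₀ :=
    ((hvol t ht).trans hle).trans
      (mul_le_mul_of_nonneg_left (htian t ht) (Real.exp_pos _).le)
  have hlog := Real.log_le_log (by positivity) hmain
  rw [Real.log_mul hC₁.ne' (by positivity), Real.log_pow,
    Real.log_mul (Real.exp_pos _).ne' hC₀.ne', Real.log_exp] at hlog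
  have hDm : D + (K : ℝ) / α * Real.log (T - t) ≤ m := by
    have hrw : D + (K : ℝ) / α * Real.log (T - t) =
        (Real.log C₁ - Real.log C₀ - (1 - α) * B + K * Real.log (T - t)) / α := by
      rw [hD]; ring
    rw [hrw, div_le_iff₀ hα0]
    linarith
  linarith [neg_abs_le D]
end

section
/- Let X be a nonempty compact topological space and μ a finite Borel measure on X with μ(X) > 0. Let α ∈ (0,1], B ∈ ℝ, C₀ > 0, C₁ > 0 and let K ≥ 0 be an integer. Suppose that for each t ∈ [0,∞) we are given a continuous function f_t : X → ℝ with: (i) f_t(x) ≤ B for all x ∈ X; (ii) ∫_X e^{α(f_t − inf_X f_t)} dμ ≤ C₀; and (iii) ∫_X e^{f_t} dμ ≥ C₁·e^{−Kt}. Then there exists a constant C' > 0 such that for all t ∈ [0,∞), inf_X f_t ≥ −(K/α)·t − C'. -/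
/-!
Writing `m = inf f_t`, the identity `f_t = (1 - α) f_t + α m + α (f_t - m)` and the bounds
`f_t ≤ B`, `α ≤ 1` give `e^{f_t} ≤ e^{(1-α)B + αm} e^{α(f_t - m)}`. Integrating and comparing the
volume lower bound with the α-invariant estimate yields `C₁ e^{-Kt} ≤ C₀ e^{(1-α)B + αm}`; taking
logarithms and dividing by `α` bounds `m` from below.
-/

open MeasureTheory Set

/-- The key estimate of Section 3: for a family of continuous functions `f t`
on a compact space, uniformly bounded above, satisfying Tian's α-invariant
estimate and the volume lower bound `∫ e^{f_t} dμ ≥ C₁·e^{-Kt}`, one gets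
`inf f_t ≥ -(K/α)·t - C'`. -/
theorem inf_lower_bound_infinite_time {X : Type*} [TopologicalSpace X]
    [CompactSpace X] [Nonempty X] [MeasurableSpace X] [BorelSpace X]
    (μ : Measure X) [IsFiniteMeasure μ] (hμ : 0 < μ Set.univ)
    (α : ℝ) (hα0 : 0 < α) (hα1 : α ≤ 1) (B : ℝ) (C₀ C₁ : ℝ) (hC₀ : 0 < C₀)
    (hC₁ : 0 < C₁) (K : ℕ)
    (f : ℝ → X → ℝ)
    (hcont : ∀ t : ℝ, 0 ≤ t → Continuous (f t))
    (hB : ∀ t : ℝ, 0 ≤ t → ∀ x : X, f t x ≤ B)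
    (htian : ∀ t : ℝ, 0 ≤ t →
      ∫ x, Real.exp (α * (f t x - sInf (Set.range (f t)))) ∂μ ≤ C₀)
    (hvol : ∀ t : ℝ, 0 ≤ t →
      C₁ * Real.exp (-(K : ℝ) * t) ≤ ∫ x, Real.exp (f t x) ∂μ) :
    ∃ C' : ℝ, 0 < C' ∧ ∀ t : ℝ, 0 ≤ t →
      sInf (Set.range (f t)) ≥ -((K : ℝ) / α) * t - C' := by
  set D : ℝ := ((1 - α) * B + Real.log C₀ - Real.log C₁) / α with hD
  -- `D` is the constant left after taking logarithms and dividing by `α`.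
  refine ⟨|D| + 1, by positivity, fun t ht => ?_⟩
  set m : ℝ := sInf (Set.range (f t)) with hm
  have hint : Integrable (fun x => Real.exp (α * (f t x - m))) μ := by
    have hc : Continuous (fun x => Real.exp (α * (f t x - m))) := by
      have := hcont t ht
      fun_prop
    refine Integrable.of_bound hc.measurable.aestronglyMeasurable
      (Real.exp (α * (B - m))) (Filter.Eventually.of_forall fun x => ?_)
    rw [Real.norm_eq_abs, Real.abs_exp]
    have := hB t ht x
    gcongr
  -- Since `1 - α ≥ 0`, the upper bound `f ≤ B` gives
  -- `e^f = e^{(1-α)f} e^{αm} e^{α(f-m)} ≤ e^{(1-α)B + αm} e^{α(f-m)}`.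
  have hle : ∫ x, Real.exp (f t x) ∂μ ≤
      ∫ x, Real.exp ((1 - α) * B + α * m) * Real.exp (α * (f t x - m)) ∂μ := by
    refine integral_mono_of_nonneg (Filter.Eventually.of_forall fun x => (Real.exp_pos _).le)
      (hint.const_mul _) (Filter.Eventually.of_forall fun x => ?_)
    simp only [← Real.exp_add]
    apply Real.exp_le_exp.mpr
    nlinarith [mul_le_mul_of_nonneg_left (hB t ht x) (sub_nonneg.mpr hα1)]
  rw [integral_const_mul] at hle
  have hmain : C₁ * Real.exp (-(K : ℝ) * t) ≤ Real.exp ((1 - α) * B + α * m) * C₀ :=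
    (hvol t ht).trans (hle.trans (mul_le_mul_of_nonneg_left (htian t ht) (Real.exp_pos _).le))
  have hlog := Real.log_le_log (by positivity) hmain
  rw [Real.log_mul hC₁.ne' (Real.exp_pos _).ne', Real.log_mul (Real.exp_pos _).ne' hC₀.ne',
    Real.log_exp, Real.log_exp] at hlog
  have hDα : α * D = (1 - α) * B + Real.log C₀ - Real.log C₁ := by
    rw [hD]
    field_simp
  have hKα : α * ((K : ℝ) / α) = K := by field_simp
  have hfin : α * (-((K : ℝ) / α) * t - D) ≤ α * m := by
    have : α * (-((K : ℝ) / α) * t - D) = -(α * ((K : ℝ) / α)) * t - α * D := by ring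
    rw [this, hKα, hDα]
    linarith
  have := le_of_mul_le_mul_left hfin hα0
  linarith [le_abs_self D]
end
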